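/- For every n ≥ 9, the symmetric function p_{(1^n)} + p_{(2,1^{n−2})} + p_{(2,2,1^{n−4})} + p_{(3,1^{n−3})} + p_{(n−2,1,1)} is Schur-positive; that is, its expansion in the Schur basis {s_λ : λ ⊢ n} has nonnegative coefficients. -/

import Mathlib

open Finset MvPolynomial

/-- A partition of `n`, represented as a weakly decreasing list of positive
integers summing to `n`. -/
def IsPartitionOf (n : ℕ) (l : List ℕ) : Prop :=
  l.Pairwise (· ≥ ·) ∧ (∀ x ∈ l, 0 < x) ∧ l.sum = n

/-- `T : ℕ → ℕ → ℕ` is a semistandard Young tableau of shape `l`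
(rows weakly increase, columns strictly increase, entries are `0` outside
of the diagram; entries are 0-indexed, so entry value `k` stands for the
letter `k+1`). -/
def IsSSYT (l : List ℕ) (T : ℕ → ℕ → ℕ) : Prop :=
  (∀ i j1 j2, j1 ≤ j2 → j2 < l.getD i 0 → T i j1 ≤ T i j2) ∧
  (∀ i1 i2 j, i1 < i2 → j < l.getD i2 0 → T i1 j < T i2 j) ∧
  (∀ i j, l.getD i 0 ≤ j → T i j = 0)

/-- The tableau `T` of shape `l` has content `ν`: for every `k`, the number of
cells of the diagram of `l` whose entry is `k` equals the `(k+1)`-st part of `ν`. -/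
def HasContent (l : List ℕ) (T : ℕ → ℕ → ℕ) (ν : List ℕ) : Prop :=
  ∀ k, Nat.card {c : ℕ × ℕ // c.2 < l.getD c.1 0 ∧ T c.1 c.2 = k} = ν.getD k 0

/-- The Kostka number `K_{l,ν}`: the number of semistandard Young tableaux of
shape `l` and content `ν`. -/
noncomputable def kostka (l ν : List ℕ) : ℕ :=
  Nat.card {T : ℕ → ℕ → ℕ // IsSSYT l T ∧ HasContent l T ν}

/-- `f^λ`, the number of standard Young tableaux of shape `l`. -/
noncomputable def fSYT (l : List ℕ) : ℕ := kostka l (List.replicate l.sum 1)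

/-- Dominance order: all partial sums of `l` are at most those of `m`. -/
def DomLE (l m : List ℕ) : Prop := ∀ k, (l.take k).sum ≤ (m.take k).sum

/-- The standard immersion order: dominance together with `f^λ ≤ f^μ`. -/
def StdLE (l m : List ℕ) : Prop := DomLE l m ∧ fSYT l ≤ fSYT m

/-- Strict standard immersion order. -/
def StdLT (l m : List ℕ) : Prop := StdLE l m ∧ l ≠ m

/-- `m` covers `l` in the standard immersion poset on partitions of `n`. -/
def StdCovBy (n : ℕ) (l m : List ℕ) : Prop :=
  StdLT l m ∧ ∀ ν, IsPartitionOf n ν → StdLT l ν → ¬ StdLT ν m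

/-- `l` is a maximal element of the standard immersion poset on partitions of `n`. -/
def StdMaximal (n : ℕ) (l : List ℕ) : Prop :=
  ∀ m, IsPartitionOf n m → m ≠ l → ¬ StdLE l m

/-- The immersion order on partitions of `n`: `l ≤_I m` iff
`K_{l,α} ≤ K_{m,α}` for every partition `α` of `n`. -/
def ImmersionLE (n : ℕ) (l m : List ℕ) : Prop :=
  ∀ ν, IsPartitionOf n ν → kostka l ν ≤ kostka m ν

/-- Strict immersion order. -/
def ImmersionLT (n : ℕ) (l m : List ℕ) : Prop := ImmersionLE n l m ∧ l ≠ m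

/-- `m` covers `l` in the immersion poset on partitions of `n`. -/
def ImmersionCovBy (n : ℕ) (l m : List ℕ) : Prop :=
  ImmersionLT n l m ∧ ∀ ν, IsPartitionOf n ν → ImmersionLT n l ν → ¬ ImmersionLT n ν m

/-- The monomial symmetric polynomial `m_l` in `N` variables associated to a
partition `l` of `n`: the sum of `x^α` over all distinct exponent vectors `α`
whose nonzero entries are a rearrangement of the parts of `l`. -/
noncomputable def msymmList (N n : ℕ) (l : List ℕ) : MvPolynomial (Fin N) ℤ :=
  ∑ α ∈ (Fintype.piFinset fun _ : Fin N => Finset.range (n + 1)) |>.filter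
      (fun α => Multiset.filter (fun x => x ≠ 0) (Multiset.map α Finset.univ.val)
        = (↑l : Multiset ℕ)),
    MvPolynomial.monomial (Finsupp.equivFunOnFinite.symm α) (1 : ℤ)

/-- The parts of a `Nat.Partition` listed in weakly decreasing order. -/
def sortedParts {n : ℕ} (μ : Nat.Partition n) : List ℕ :=
  (μ.parts.sort (· ≤ ·)).reverse

/-- The Schur polynomial in `N` variables of a partition `l` of `n`, defined via
`s_l = ∑_{μ ⊢ n} K_{l,μ} m_μ`. -/
noncomputable def schurP (N n : ℕ) (l : List ℕ) : MvPolynomial (Fin N) ℤ :=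
  ∑ μ : Nat.Partition n, (kostka l (sortedParts μ) : ℤ) • msymmList N n (sortedParts μ)

/-- A symmetric polynomial of degree `n` is monomial-positive if it is a
nonnegative integer combination of the monomial symmetric polynomials `m_μ`, `μ ⊢ n`. -/
def MonomialPos (N n : ℕ) (f : MvPolynomial (Fin N) ℤ) : Prop :=
  ∃ c : Nat.Partition n → ℕ,
    f = ∑ μ : Nat.Partition n, (c μ : ℤ) • msymmList N n (sortedParts μ)

/-- The power sum symmetric polynomial `p_l = p_{l_1} p_{l_2} ⋯` in `N` variables. -/
noncomputable def powerSum (N : ℕ) (l : List ℕ) : MvPolynomial (Fin N) ℤ :=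
  (l.map fun r => ∑ i : Fin N, (X i : MvPolynomial (Fin N) ℤ) ^ r).prod

/-!
For a partition `lam` with at most `N` parts, `a_{lam + δ} = a_δ s_lam` in `N` variables. Expanding
the alternant `a_{lam + δ}` after column operations gives the branching rule for `s_lam`, which on
semistandard tableaux is the removal of the cells with the largest entry. Hence the coefficient of
`s_lam` in a symmetric polynomial `P` is the coefficient of `x^(lam + δ)` in `a_δ P`.

The first four power sums add up to `p_1^(n-5)` times the corresponding sum for `n = 5`, all of
whose Schur coefficients are at least `2`. Multiplying by `p_1` replaces the coefficient of
`s_lam` by the sum of the old coefficients over the partitions obtained by removing a cell of `lam`;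
as there is at least one of them, the lower bound `2` persists.

For the remaining power sum, `p_1^2 a_δ = a_{(2) + δ} + a_{(1, 1) + δ}`, and each coefficient of
`p_r a_c` is `-1`, `0` or `1`, so the coefficients of `p_{(n-2, 1, 1)}` are at least `-2`.
-/

section Alternants

variable {R : Type*} [CommRing R] {N : ℕ}

/-- The staircase `δ = (N - 1, …, 1, 0)`. -/
def staircase (N : ℕ) : Fin N → ℕ := fun i => i.rev

/-- The alternant `a_b(x) = det (x_i ^ b_j)`; for `b = δ` it is the Vandermonde determinant. -/
def alternant (b : Fin N → ℕ) (x : Fin N → R) : R :=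
  (Matrix.of fun i j => x i ^ b j).det

@[simp]
lemma staircase_castSucc (i : Fin N) : staircase (N + 1) i.castSucc = staircase N i + 1 := by
  simp only [staircase, Fin.val_rev, Fin.val_castSucc]
  lia

@[simp]
lemma staircase_succ (i : Fin N) : staircase (N + 1) i.succ = staircase N i := by
  simp [staircase, Fin.val_rev]

@[simp]
lemma staircase_last : staircase (N + 1) (Fin.last N) = 0 := by
  simp [staircase]

lemma staircase_strictAnti : StrictAnti (staircase N) :=
  fun _ _ h => Fin.rev_lt_rev.2 h

lemma alternant_comp_perm (b : Fin N → ℕ) (x : Fin N → R) (σ : Equiv.Perm (Fin N)) :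
    alternant b (x ∘ σ) = (Equiv.Perm.sign σ : ℤ) * alternant b x :=
  Matrix.det_permute σ (Matrix.of fun i j => x i ^ b j)

lemma alternant_eq_zero_of_not_injective {b : Fin N → ℕ} (hb : ¬ Function.Injective b)
    (x : Fin N → R) : alternant b x = 0 := by
  simp only [Function.Injective, not_forall] at hb
  obtain ⟨i, j, hij, hne⟩ := hb
  exact Matrix.det_zero_of_column_eq hne fun k => by simp [hij]

lemma map_alternant {S : Type*} [CommRing S] (f : R →+* S) (b : Fin N → ℕ) (x : Fin N → R) :
    f (alternant b x) = alternant b (f ∘ x) := by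
  simp only [alternant, RingHom.map_det]
  congr 1
  ext i j
  simp

lemma sum_pow_mul_alternant (r : ℕ) (b : Fin N → ℕ) (x : Fin N → R) :
    (∑ i, x i ^ r) * alternant b x = ∑ j, alternant (Function.update b j (b j + r)) x := by
  have expand_term (σ : Equiv.Perm (Fin N)) (j : Fin N) :
      ∏ i, x (σ i) ^ Function.update b j (b j + r) i = x (σ j) ^ r * ∏ i, x (σ i) ^ b i := by
    rw [← Finset.mul_prod_erase _ _ (mem_univ j),
      ← Finset.mul_prod_erase univ (fun i => x (σ i) ^ b i) (mem_univ j), Function.update_self,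
      Finset.prod_congr rfl fun i hi => by rw [Function.update_of_ne (ne_of_mem_erase hi)]]
    ring
  simp only [alternant, Matrix.det_apply', Matrix.of_apply, expand_term]
  rw [Finset.sum_comm, Finset.mul_sum]
  refine Finset.sum_congr rfl fun σ _ => ?_
  rw [← Equiv.sum_comp σ, Finset.sum_mul]
  exact Finset.sum_congr rfl fun j _ => by ring

lemma sub_mul_sum_Icc_pow_mul_pow (x y : R) (m : ℕ) {a b : ℕ} (h : a ≤ b) :
    (x - y) * ∑ k ∈ Icc a b, x ^ (k + m) * y ^ (b - k) =
      x ^ (b + (m + 1)) - y ^ (b + 1 - a) * x ^ (a + m) := by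
  induction b, h using Nat.le_induction with
  | base =>
    simp only [Icc_self, sum_singleton, tsub_self, pow_zero, add_tsub_cancel_left]
    ring
  | succ b hab ih =>
    have shift : ∑ k ∈ Icc a b, x ^ (k + m) * y ^ (b + 1 - k) =
        y * ∑ k ∈ Icc a b, x ^ (k + m) * y ^ (b - k) := by
      rw [Finset.mul_sum]
      refine Finset.sum_congr rfl fun k hk => ?_
      rw [Nat.sub_add_comm (mem_Icc.1 hk).2, pow_succ]
      ring
    rw [← insert_Icc_right_eq_Icc_add_one (by lia), Finset.sum_insert (by simp), shift, mul_add,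
      mul_left_comm (x - y) y, ih, Nat.sub_add_comm (by lia : a ≤ b + 1), tsub_self]
    ring

lemma alternant_add_staircase_eq_mul_det {lam : Fin (N + 1) → ℕ} (hlam : Antitone lam)
    (x : Fin (N + 1) → R) :
    alternant (lam + staircase (N + 1)) x =
      x (Fin.last N) ^ lam (Fin.last N) *
        ((∏ i : Fin N, (x i.castSucc - x (Fin.last N))) *
          Matrix.det (Matrix.of fun i j : Fin N =>
            ∑ k ∈ Icc (lam j.succ) (lam j.castSucc),
              x i.castSucc ^ (k + staircase N j) * x (Fin.last N) ^ (lam j.castSucc - k))) := by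
  set y := x (Fin.last N) with hy
  let entry (i : Fin (N + 1)) (j : Fin N) : R := ∑ k ∈ Icc (lam j.succ) (lam j.castSucc),
    x i ^ (k + staircase N j) * y ^ (lam j.castSucc - k)
  let B : Matrix (Fin (N + 1)) (Fin (N + 1)) R := Matrix.of fun i =>
    Fin.snoc (α := fun _ => R) (fun j => (x i - y) * entry i j) (x i ^ lam (Fin.last N))
  -- From each column except the last, subtract the multiple of the next one that cancels row `N`.
  have column_operations : alternant (lam + staircase (N + 1)) x = B.det := by
    rw [alternant, ← Matrix.det_submatrix_equiv_self Fin.revPerm,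
      ← Matrix.det_submatrix_equiv_self Fin.revPerm B]
    refine Matrix.det_eq_of_forall_col_eq_smul_add_pred
      (fun j => y ^ (lam j.rev.castSucc + 1 - lam j.rev.succ)) (fun i => by simp [B])
      fun i j => ?_
    simp only [B, entry, Matrix.submatrix_apply, Matrix.of_apply, Fin.revPerm_apply, Fin.rev_succ,
      Fin.rev_castSucc, Fin.snoc_castSucc, Pi.add_apply, staircase_castSucc, staircase_succ]
    rw [sub_mul_sum_Icc_pow_mul_pow _ _ _ (hlam Fin.castSucc_lt_succ.le)]
    ring
  have minor : B.submatrix (Fin.last N).succAbove (Fin.last N).succAbove =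
      Matrix.of fun i j : Fin N => (x i.castSucc - y) *
        (Matrix.of fun i j : Fin N => entry i.castSucc j) i j := by
    ext i j
    simp [B]
  rw [column_operations, Matrix.det_succ_row B (Fin.last N),
    Finset.sum_eq_single_of_mem _ (mem_univ (Fin.last N)), minor, Matrix.det_mul_column]
  · simp [B, entry, hy]
  · intro j _ hj
    obtain ⟨j, rfl⟩ := Fin.exists_castSucc_eq.2 hj
    simp [B, hy]

lemma det_sum_pow_mul (s : Fin N → Finset ℕ) (c : Fin N → ℕ → R) (d : Fin N → ℕ)
    (x : Fin N → R) :
    Matrix.det (Matrix.of fun i j => ∑ k ∈ s j, x i ^ (k + d j) * c j k) =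
      ∑ mu ∈ Fintype.piFinset s, (∏ j, c j (mu j)) * alternant (mu + d) x := by
  simp only [alternant, Matrix.det_apply', Matrix.of_apply, Finset.prod_univ_sum, Finset.mul_sum]
  rw [Finset.sum_comm]
  refine Finset.sum_congr rfl fun mu _ => Finset.sum_congr rfl fun σ _ => ?_
  rw [Finset.prod_mul_distrib]
  simp only [Pi.add_apply]
  ring

end Alternants

section Branching

variable {R : Type*} [CommRing R] {N : ℕ}

/-- The sequences `mu` interlacing with `lam`, i.e. `lam_{j+1} ≤ mu_j ≤ lam_j` for all `j`; for a
partition `lam`, these are the partitions such that `lam / mu` is a horizontal strip. -/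
def interlacing (lam : Fin (N + 1) → ℕ) : Finset (Fin N → ℕ) :=
  Fintype.piFinset fun j => Icc (lam j.succ) (lam j.castSucc)

lemma mem_interlacing {lam : Fin (N + 1) → ℕ} {mu : Fin N → ℕ} :
    mu ∈ interlacing lam ↔ ∀ j, lam j.succ ≤ mu j ∧ mu j ≤ lam j.castSucc := by
  simp [interlacing, Fintype.mem_piFinset]

lemma antitone_of_mem_interlacing {lam : Fin (N + 1) → ℕ} (hlam : Antitone lam) {mu : Fin N → ℕ}
    (hmu : mu ∈ interlacing lam) : Antitone mu := by
  intro i j hij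
  rcases hij.eq_or_lt with rfl | hij
  · rfl
  · exact ((mem_interlacing.1 hmu j).2.trans (hlam (Fin.succ_le_castSucc_iff.2 hij))).trans
      (mem_interlacing.1 hmu i).1

lemma sum_sub_sum_of_mem_interlacing {lam : Fin (N + 1) → ℕ} {mu : Fin N → ℕ}
    (hmu : mu ∈ interlacing lam) :
    ∑ i, lam i - ∑ i, mu i = lam (Fin.last N) + ∑ j, (lam j.castSucc - mu j) := by
  have le_castSucc (j : Fin N) (_ : j ∈ univ) : mu j ≤ lam j.castSucc :=
    (mem_interlacing.1 hmu j).2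
  rw [Fin.sum_univ_castSucc, Finset.sum_tsub_distrib _ le_castSucc]
  have := Finset.sum_le_sum le_castSucc
  lia

lemma sum_le_sum_of_mem_interlacing {lam : Fin (N + 1) → ℕ} {mu : Fin N → ℕ}
    (hmu : mu ∈ interlacing lam) : ∑ i, mu i ≤ ∑ i, lam i := by
  rw [Fin.sum_univ_castSucc lam]
  exact le_add_right (Finset.sum_le_sum fun j _ => (mem_interlacing.1 hmu j).2)

lemma interlacing_zero : interlacing (0 : Fin (N + 1) → ℕ) = {0} := by
  ext mu
  simp [mem_interlacing, funext_iff]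

/-- Schur polynomials through their branching rule; unfolding the recursion gives the sum over
Gelfand–Tsetlin patterns with top row `lam`. -/
def gtSchur : {N : ℕ} → (Fin N → ℕ) → (Fin N → R) → R
  | 0, _, _ => 1
  | N + 1, lam, x =>
    ∑ mu ∈ interlacing lam,
      x (Fin.last N) ^ (∑ i, lam i - ∑ i, mu i) * gtSchur mu (x ∘ Fin.castSucc)

lemma alternant_branching {lam : Fin (N + 1) → ℕ} (hlam : Antitone lam) (x : Fin (N + 1) → R) :
    alternant (lam + staircase (N + 1)) x =
      (∏ i : Fin N, (x i.castSucc - x (Fin.last N))) *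
        ∑ mu ∈ interlacing lam, x (Fin.last N) ^ (∑ i, lam i - ∑ i, mu i) *
          alternant (mu + staircase N) (x ∘ Fin.castSucc) := by
  rw [alternant_add_staircase_eq_mul_det hlam, mul_left_comm]
  have expansion := det_sum_pow_mul (fun j => Icc (lam j.succ) (lam j.castSucc))
    (fun j k => x (Fin.last N) ^ (lam j.castSucc - k)) (staircase N) (x ∘ Fin.castSucc)
  simp only [Function.comp_apply] at expansion
  rw [expansion, Finset.mul_sum]
  congr 1
  refine Finset.sum_congr rfl fun mu hmu => ?_
  rw [sum_sub_sum_of_mem_interlacing hmu, pow_add, Finset.prod_pow_eq_pow_sum, mul_assoc]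

lemma alternant_staircase_succ (x : Fin (N + 1) → R) :
    alternant (staircase (N + 1)) x =
      (∏ i : Fin N, (x i.castSucc - x (Fin.last N))) *
        alternant (staircase N) (x ∘ Fin.castSucc) := by
  simpa [interlacing_zero] using
    alternant_branching (lam := (0 : Fin (N + 1) → ℕ)) antitone_const x

theorem alternant_add_staircase {lam : Fin N → ℕ} (hlam : Antitone lam) (x : Fin N → R) :
    alternant (lam + staircase N) x = alternant (staircase N) x * gtSchur lam x := by
  induction N with
  | zero => simp [alternant, gtSchur]
  | succ N ih =>
    rw [alternant_branching hlam, alternant_staircase_succ, gtSchur, mul_assoc]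
    congr 1
    rw [Finset.mul_sum]
    refine Finset.sum_congr rfl fun mu hmu => ?_
    rw [ih (antitone_of_mem_interlacing hlam hmu), mul_left_comm]

lemma map_gtSchur {S : Type*} [CommRing S] (f : R →+* S) (lam : Fin N → ℕ) (x : Fin N → R) :
    f (gtSchur lam x) = gtSchur lam (f ∘ x) := by
  induction N with
  | zero => simp [gtSchur]
  | succ N ih => simp [gtSchur, ih, Function.comp_assoc]

end Branching

section Coefficients

/-- The coefficient of `x^b`, for an exponent vector `b` given as a plain function. -/
noncomputable def expCoeff {ι R : Type*} [Finite ι] [CommSemiring R] (b : ι → ℕ) :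
    MvPolynomial ι R →ₗ[R] R :=
  lcoeff R (Finsupp.equivFunOnFinite.symm b)

variable {ι R : Type*} [CommSemiring R]

section Finite

variable [Finite ι]

lemma expCoeff_ext {P Q : MvPolynomial ι R} (h : ∀ b, expCoeff b P = expCoeff b Q) : P = Q :=
  MvPolynomial.ext _ _ fun m => by simpa [expCoeff] using h m

lemma expCoeff_rename_perm (σ : Equiv.Perm ι) (b : ι → ℕ) (P : MvPolynomial ι R) :
    expCoeff b (rename σ P) = expCoeff (b ∘ σ) P := by
  have exponents : Finsupp.equivFunOnFinite.symm b =
      Finsupp.mapDomain σ (Finsupp.equivFunOnFinite.symm (b ∘ σ)) := by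
    ext i
    simp [Finsupp.mapDomain_equiv_apply]
  simp only [expCoeff, lcoeff_apply, exponents, coeff_rename_mapDomain σ σ.injective]

lemma expCoeff_X_pow_mul [DecidableEq ι] (b : ι → ℕ) (i : ι) (r : ℕ) (Q : MvPolynomial ι R) :
    expCoeff b (X i ^ r * Q) =
      if r ≤ b i then expCoeff (Function.update b i (b i - r)) Q else 0 := by
  have exponents : Finsupp.equivFunOnFinite.symm b - Finsupp.single i r =
      Finsupp.equivFunOnFinite.symm (Function.update b i (b i - r)) := by
    ext j
    obtain rfl | hj := eq_or_ne j i <;> simp [*]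
  simp [expCoeff, X_pow_eq_monomial, coeff_monomial_mul', exponents]

end Finite

section Fintype

variable [Fintype ι]

lemma prod_X_pow_eq_monomial_equivFunOnFinite (c : ι → ℕ) :
    ∏ i, (X i : MvPolynomial ι R) ^ c i = monomial (Finsupp.equivFunOnFinite.symm c) 1 := by
  simp [monomial_eq, Finsupp.prod_fintype]

lemma expCoeff_prod_X_pow (b c : ι → ℕ) [Decidable (c = b)] :
    expCoeff b (∏ i, (X i : MvPolynomial ι R) ^ c i) = if c = b then 1 else 0 := by
  classical
  simp [prod_X_pow_eq_monomial_equivFunOnFinite, expCoeff, coeff_monomial]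

lemma expCoeff_add_prod_X_pow_mul (b c : ι → ℕ) (P : MvPolynomial ι R) :
    expCoeff (b + c) ((∏ i, X i ^ c i) * P) = expCoeff b P := by
  have exponents : Finsupp.equivFunOnFinite.symm (b + c) =
      Finsupp.equivFunOnFinite.symm c + Finsupp.equivFunOnFinite.symm b := by
    ext i
    simp [add_comm]
  simp [prod_X_pow_eq_monomial_equivFunOnFinite, expCoeff, exponents, coeff_monomial_mul]

lemma expCoeff_psum_mul [DecidableEq ι] (b : ι → ℕ) (r : ℕ) (Q : MvPolynomial ι R) :
    expCoeff b (psum ι R r * Q) =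
      ∑ i, if r ≤ b i then expCoeff (Function.update b i (b i - r)) Q else 0 := by
  simp [psum, Finset.sum_mul, expCoeff_X_pow_mul]

lemma expCoeff_eq_zero_of_isHomogeneous {P : MvPolynomial ι R} {n : ℕ} (hP : P.IsHomogeneous n)
    {b : ι → ℕ} (hb : ∑ i, b i ≠ n) : expCoeff b P = 0 := by
  rw [expCoeff, lcoeff_apply]
  exact hP.coeff_eq_zero (by simpa [Finsupp.degree_eq_sum] using hb)

end Fintype

variable {N : ℕ}

lemma expCoeff_killCompl_castSucc (b : Fin N → ℕ) (P : MvPolynomial (Fin (N + 1)) R) :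
    expCoeff b (killCompl (Fin.castSucc_injective N) P) =
      expCoeff (Fin.snoc b 0 : Fin (N + 1) → ℕ) P := by
  have exponents : Finsupp.mapDomain Fin.castSucc (Finsupp.equivFunOnFinite.symm b) =
      Finsupp.equivFunOnFinite.symm (Fin.snoc b 0 : Fin (N + 1) → ℕ) := by
    ext i
    induction i using Fin.lastCases with
    | last => simp [Finsupp.mapDomain_of_notMem_range]
    | cast i => simp [Finsupp.mapDomain_apply (Fin.castSucc_injective N)]
  simp only [expCoeff, lcoeff_apply, coeff_killCompl, exponents]

lemma expCoeff_rename_castSucc (b : Fin (N + 1) → ℕ) (P : MvPolynomial (Fin N) R) :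
    expCoeff b (rename Fin.castSucc P) =
      if b (Fin.last N) = 0 then expCoeff (b ∘ Fin.castSucc) P else 0 := by
  split_ifs with hb
  · rw [← killCompl_rename_app (Fin.castSucc_injective N) P, expCoeff_killCompl_castSucc, ← hb,
      killCompl_rename_app]
    exact congrArg (expCoeff · _) (Fin.snoc_init_self b).symm
  · rw [expCoeff, lcoeff_apply]
    refine coeff_rename_eq_zero _ _ _ fun u hu => absurd (DFunLike.congr_fun hu (Fin.last N)) ?_
    simpa [Finsupp.mapDomain_of_notMem_range] using Ne.symm hb

lemma expCoeff_X_last_pow_mul_rename_castSucc (a : Fin (N + 1) → ℕ) (k : ℕ)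
    (P : MvPolynomial (Fin N) R) :
    expCoeff a (X (Fin.last N) ^ k * rename Fin.castSucc P) =
      if a (Fin.last N) = k then expCoeff (a ∘ Fin.castSucc) P else 0 := by
  have init_update : Function.update a (Fin.last N) (a (Fin.last N) - k) ∘ Fin.castSucc =
      a ∘ Fin.castSucc := by
    ext i
    simp
  rw [expCoeff_X_pow_mul, expCoeff_rename_castSucc, init_update, Function.update_self]
  split_ifs <;> first | rfl | lia

end Coefficients

section Alternating

variable {N : ℕ}

/-- A polynomial is alternating if permuting the variables multiplies it by the sign of the
permutation. -/
def IsAlternating (Q : MvPolynomial (Fin N) ℤ) : Prop :=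
  ∀ σ : Equiv.Perm (Fin N), rename σ Q = (Equiv.Perm.sign σ : ℤ) • Q

lemma isAlternating_alternant (b : Fin N → ℕ) :
    IsAlternating (alternant b (X : Fin N → MvPolynomial (Fin N) ℤ)) := by
  intro σ
  have := map_alternant (rename σ : MvPolynomial (Fin N) ℤ →ₐ[ℤ] _).toRingHom b X
  simp only [AlgHom.toRingHom_eq_coe, RingHom.coe_coe] at this
  rw [this, zsmul_eq_mul, ← alternant_comp_perm]
  congr 1
  ext1 i
  simp

namespace IsAlternating

variable {P Q : MvPolynomial (Fin N) ℤ}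

lemma mul_isSymmetric (hQ : IsAlternating Q) (hP : P.IsSymmetric) : IsAlternating (Q * P) := by
  intro σ
  rw [map_mul, hQ σ, hP σ, smul_mul_assoc]

lemma zsmul (hQ : IsAlternating Q) (k : ℤ) : IsAlternating (k • Q) := by
  intro σ
  rw [map_zsmul, hQ σ, smul_comm]

lemma sum {κ : Type*} {s : Finset κ} {Q : κ → MvPolynomial (Fin N) ℤ}
    (hQ : ∀ k ∈ s, IsAlternating (Q k)) : IsAlternating (∑ k ∈ s, Q k) := by
  intro σ
  rw [map_sum, Finset.smul_sum]
  exact Finset.sum_congr rfl fun k hk => hQ k hk σ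

lemma isSymmetric_of_mul (hQ : IsAlternating Q) (hQ0 : Q ≠ 0) (hQP : IsAlternating (Q * P)) :
    P.IsSymmetric := by
  intro σ
  have sign_ne_zero : (Equiv.Perm.sign σ : ℤ) ≠ 0 := by simp
  have := hQP σ
  rw [map_mul, hQ σ, smul_mul_assoc] at this
  exact mul_left_cancel₀ hQ0 (smul_right_injective _ sign_ne_zero this)

lemma expCoeff_comp_perm (hQ : IsAlternating Q) (b : Fin N → ℕ) (σ : Equiv.Perm (Fin N)) :
    expCoeff (b ∘ σ) Q = Equiv.Perm.sign σ * expCoeff b Q := by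
  rw [← expCoeff_rename_perm, hQ σ, map_smul, smul_eq_mul]

lemma expCoeff_eq_zero (hQ : IsAlternating Q) {b : Fin N → ℕ} (hb : ¬ Function.Injective b) :
    expCoeff b Q = 0 := by
  simp only [Function.Injective, not_forall] at hb
  obtain ⟨i, j, hij, hne⟩ := hb
  have swap_eq := hQ.expCoeff_comp_perm b (Equiv.swap i j)
  have comp_swap : b ∘ Equiv.swap i j = b := by
    rw [Equiv.comp_swap_eq_update, hij, Function.update_eq_self, ← hij, Function.update_eq_self]
  rw [comp_swap, Equiv.Perm.sign_swap hne] at swap_eq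
  push_cast at swap_eq
  lia

lemma ext (hP : IsAlternating P) (hQ : IsAlternating Q)
    (h : ∀ b, StrictAnti b → expCoeff b P = expCoeff b Q) : P = Q := by
  refine expCoeff_ext fun b => ?_
  by_cases hb : Function.Injective b
  · let σ := Tuple.sort (OrderDual.toDual ∘ b)
    have antitone_sort : Antitone (b ∘ σ) := Tuple.monotone_sort (OrderDual.toDual ∘ b)
    have sorted := h (b ∘ σ) (antitone_sort.strictAnti_of_injective (hb.comp σ.injective))
    rw [hP.expCoeff_comp_perm, hQ.expCoeff_comp_perm] at sorted
    exact mul_left_cancel₀ (by simp) sorted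
  · rw [hP.expCoeff_eq_zero hb, hQ.expCoeff_eq_zero hb]

end IsAlternating

lemma expCoeff_alternant (b c : Fin N → ℕ) :
    expCoeff b (alternant c X) =
      ∑ σ : Equiv.Perm (Fin N), if b ∘ σ = c then (Equiv.Perm.sign σ : ℤ) else 0 := by
  rw [alternant, Matrix.det_apply, map_sum]
  refine Finset.sum_congr rfl fun σ _ => ?_
  have reindex : ∏ i, (X (σ i) : MvPolynomial (Fin N) ℤ) ^ c i = ∏ i, X i ^ (c ∘ σ.symm) i := by
    rw [← Equiv.prod_comp σ fun i => X i ^ (c ∘ σ.symm) i]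
    simp
  simp only [Matrix.of_apply, reindex]
  rw [Units.smul_def, map_smul, expCoeff_prod_X_pow, smul_eq_mul, mul_ite, mul_one, mul_zero]
  exact if_congr (by rw [Equiv.comp_symm_eq, eq_comm]) rfl rfl

lemma expCoeff_alternant_of_strictAnti {b c : Fin N → ℕ} (hb : StrictAnti b) (hc : StrictAnti c) :
    expCoeff b (alternant c X : MvPolynomial (Fin N) ℤ) = if b = c then 1 else 0 := by
  rw [expCoeff_alternant, Finset.sum_eq_single_of_mem 1 (mem_univ _)]
  · simp
  · intro σ _ hσ
    refine if_neg fun h => hσ (Equiv.ext fun i => ?_)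
    have sort_eq : b ∘ σ = b ∘ (1 : Equiv.Perm (Fin N)) :=
      Tuple.unique_antitone (by rw [h]; exact hc.antitone) hb.antitone
    exact hb.injective (congrFun sort_eq i)

lemma exists_comp_perm_eq_of_expCoeff_alternant_ne_zero {b c : Fin N → ℕ}
    (h : expCoeff b (alternant c X : MvPolynomial (Fin N) ℤ) ≠ 0) :
    ∃ σ : Equiv.Perm (Fin N), b ∘ σ = c := by
  rw [expCoeff_alternant] at h
  obtain ⟨σ, -, hσ⟩ := Finset.exists_ne_zero_of_sum_ne_zero h
  exact ⟨σ, (ite_ne_right_iff.1 hσ).1⟩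

lemma abs_expCoeff_alternant_le_one (b c : Fin N → ℕ) :
    |expCoeff b (alternant c X : MvPolynomial (Fin N) ℤ)| ≤ 1 := by
  by_cases hc : Function.Injective c
  · by_cases h : expCoeff b (alternant c X : MvPolynomial (Fin N) ℤ) = 0
    · simp [h]
    obtain ⟨σ, rfl⟩ := exists_comp_perm_eq_of_expCoeff_alternant_ne_zero h
    rw [expCoeff_alternant, Finset.sum_eq_single_of_mem σ (mem_univ _)]
    · simp
    · intro τ _ hτ
      refine if_neg fun h => hτ (Equiv.ext fun i => ?_)
      have hb : Function.Injective b := (σ.injective_comp b).1 hc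
      exact hb (congrFun h i)
  · simp [alternant_eq_zero_of_not_injective hc]

lemma alternant_staircase_ne_zero :
    (alternant (staircase N) X : MvPolynomial (Fin N) ℤ) ≠ 0 := by
  intro h
  have := expCoeff_alternant_of_strictAnti (staircase_strictAnti (N := N)) staircase_strictAnti
  simp [h] at this

lemma isSymmetric_gtSchur {lam : Fin N → ℕ} (hlam : Antitone lam) :
    (gtSchur lam X : MvPolynomial (Fin N) ℤ).IsSymmetric := by
  refine (isAlternating_alternant (staircase N)).isSymmetric_of_mul alternant_staircase_ne_zero ?_
  rw [← alternant_add_staircase hlam]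
  exact isAlternating_alternant _

end Alternating

lemma isHomogeneous_gtSchur {ι R : Type*} [CommRing R] {N : ℕ} (lam : Fin N → ℕ)
    {x : Fin N → MvPolynomial ι R} (hx : ∀ i, (x i).IsHomogeneous 1) :
    (gtSchur lam x).IsHomogeneous (∑ i, lam i) := by
  induction N with
  | zero => simpa [gtSchur] using isHomogeneous_one ι R
  | succ N ih =>
    rw [gtSchur]
    refine IsHomogeneous.sum _ _ _ fun mu hmu => ?_
    have := ((hx (Fin.last N)).pow (∑ i, lam i - ∑ i, mu i)).mul (ih mu fun i => hx i.castSucc)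
    rwa [one_mul, Nat.sub_add_cancel (sum_le_sum_of_mem_interlacing hmu)] at this

section Padding

variable {N n : ℕ}

/-- The first `N` entries of a list, padded with zeros: a partition as an exponent vector. -/
def pad (N : ℕ) (l : List ℕ) : Fin N → ℕ := fun i => l.getD i 0

lemma antitone_pad {l : List ℕ} (hl : l.Pairwise (· ≥ ·)) : Antitone (pad N l) := by
  intro i j hij
  rw [pad, pad]
  by_cases hj : (j : ℕ) < l.length
  · have hi : (i : ℕ) < l.length := lt_of_le_of_lt hij hj
    rw [List.getD_eq_getElem _ _ hi, List.getD_eq_getElem _ _ hj]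
    exact hl.rel_get_of_le (a := ⟨i, hi⟩) (b := ⟨j, hj⟩) hij
  · simp [not_lt.1 hj]

lemma ofFn_pad {l : List ℕ} (hl : l.length ≤ N) :
    List.ofFn (pad N l) = l ++ List.replicate (N - l.length) 0 := by
  refine List.ext_getElem (by simp [hl]) fun i _ _ => ?_
  by_cases hi : i < l.length <;> simp [pad, List.getElem_append, hi]

lemma sum_pad {l : List ℕ} (hl : l.length ≤ N) : ∑ i, pad N l i = l.sum := by
  rw [← List.sum_ofFn, ofFn_pad hl]
  simp

lemma coe_sortedParts (μ : n.Partition) : (sortedParts μ : Multiset ℕ) = μ.parts := by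
  simp [sortedParts]

lemma pairwise_sortedParts (μ : n.Partition) : (sortedParts μ).Pairwise (· ≥ ·) := by
  rw [sortedParts, List.pairwise_reverse]
  exact μ.parts.pairwise_sort (· ≤ ·)

lemma sum_sortedParts (μ : n.Partition) : (sortedParts μ).sum = n := by
  rw [← Multiset.sum_coe, coe_sortedParts, μ.parts_sum]

lemma pos_of_mem_sortedParts {μ : n.Partition} {r : ℕ} (hr : r ∈ sortedParts μ) : 0 < r := by
  rw [← Multiset.mem_coe, coe_sortedParts] at hr
  exact μ.parts_pos hr

lemma length_sortedParts_le (μ : n.Partition) : (sortedParts μ).length ≤ n :=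
  (List.length_le_sum_of_one_le _ fun _ => pos_of_mem_sortedParts).trans_eq (sum_sortedParts μ)

lemma filter_map_pad_sortedParts (hn : n ≤ N) (μ : n.Partition) :
    Multiset.filter (· ≠ 0) (Multiset.map (pad N (sortedParts μ)) univ.val) = μ.parts := by
  rw [Fin.univ_val_map, ofFn_pad ((length_sortedParts_le μ).trans hn), ← coe_sortedParts,
    Multiset.filter_coe, List.filter_append,
    List.filter_eq_self.2 fun r hr => by simpa using (pos_of_mem_sortedParts hr).ne']
  simp

lemma eq_of_antitone_of_filter_map_eq {a b : Fin N → ℕ} (ha : Antitone a) (hb : Antitone b)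
    (h : Multiset.filter (· ≠ 0) (Multiset.map a univ.val) =
      Multiset.filter (· ≠ 0) (Multiset.map b univ.val)) : a = b := by
  have zeros_eq : Multiset.filter (¬ · ≠ 0) (Multiset.map a univ.val) =
      Multiset.filter (¬ · ≠ 0) (Multiset.map b univ.val) := by
    have card_a := congrArg Multiset.card
      (Multiset.filter_add_not (· ≠ 0) (Multiset.map a univ.val))
    have card_b := congrArg Multiset.card
      (Multiset.filter_add_not (· ≠ 0) (Multiset.map b univ.val))
    simp only [Multiset.card_add, Multiset.card_map, h, not_not, Multiset.filter_eq',
      Multiset.card_replicate] at card_a card_b ⊢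
    congr 1
    lia
  have map_eq : Multiset.map a univ.val = Multiset.map b univ.val := by
    rw [← Multiset.filter_add_not (· ≠ 0) (Multiset.map a univ.val), h, zeros_eq,
      Multiset.filter_add_not]
  rw [Fin.univ_val_map, Fin.univ_val_map, Multiset.coe_eq_coe] at map_eq
  exact List.ofFn_injective (map_eq.eq_of_pairwise' (r := (· ≥ ·))
    (List.pairwise_ofFn.2 fun _ _ hij => ha hij.le) (List.pairwise_ofFn.2 fun _ _ hij => hb hij.le))

lemma pad_sortedParts_injective (hn : n ≤ N) :
    Function.Injective fun μ : n.Partition => pad N (sortedParts μ) := by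
  intro μ ν h
  apply Nat.Partition.ext
  rw [← filter_map_pad_sortedParts hn μ, ← filter_map_pad_sortedParts hn ν]
  exact congrArg (fun a => Multiset.filter (· ≠ 0) (Multiset.map a univ.val)) h

lemma exists_pad_sortedParts_eq {lam : Fin N → ℕ} (hn : n ≤ N) (hlam : Antitone lam)
    (hsum : ∑ i, lam i = n) : ∃ μ : n.Partition, pad N (sortedParts μ) = lam := by
  let μ : n.Partition := Nat.Partition.ofSums n (Multiset.map lam univ.val) hsum
  exact ⟨μ, eq_of_antitone_of_filter_map_eq (antitone_pad (pairwise_sortedParts μ)) hlam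
    (filter_map_pad_sortedParts hn μ)⟩

end Padding

section MonomialExpansion

variable {N n : ℕ}

lemma expCoeff_msymmList {l : List ℕ} (hl : l.sum = n) (a : Fin N → ℕ) :
    expCoeff a (msymmList N n l) =
      if Multiset.filter (· ≠ 0) (Multiset.map a univ.val) = ↑l then 1 else 0 := by
  have mem_support_iff : (a ∈ (Fintype.piFinset fun _ : Fin N => range (n + 1)) ∧
      Multiset.filter (· ≠ 0) (Multiset.map a univ.val) = ↑l) ↔
      Multiset.filter (· ≠ 0) (Multiset.map a univ.val) = ↑l := by
    refine and_iff_right_of_imp fun h => Fintype.mem_piFinset.2 fun i => mem_range_succ_iff.2 ?_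
    obtain hi | hi := eq_or_ne (a i) 0
    · simp [hi]
    · rw [← hl]
      refine List.single_le_sum (fun _ _ => Nat.zero_le _) _ (Multiset.mem_coe.1 ?_)
      rw [← h]
      exact Multiset.mem_filter.2 ⟨Multiset.mem_map_of_mem a (mem_univ i), hi⟩
  simp only [msymmList, map_sum, expCoeff, lcoeff_apply, coeff_monomial,
    EmbeddingLike.apply_eq_iff_eq, Finset.sum_ite_eq', Finset.mem_filter]
  exact if_congr mem_support_iff rfl rfl

lemma eq_sum_msymmList (hn : n ≤ N) {P : MvPolynomial (Fin N) ℤ} (hsymm : P.IsSymmetric)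
    (hP : P.IsHomogeneous n) :
    P = ∑ μ : n.Partition, expCoeff (pad N (sortedParts μ)) P • msymmList N n (sortedParts μ) := by
  refine expCoeff_ext fun a => ?_
  simp only [map_sum, map_smul, expCoeff_msymmList (sum_sortedParts _), coe_sortedParts,
    smul_eq_mul, mul_ite, mul_one, mul_zero]
  by_cases ha : ∑ i, a i = n
  · let σ := Tuple.sort (OrderDual.toDual ∘ a)
    have antitone_sort : Antitone (a ∘ σ) := Tuple.monotone_sort (OrderDual.toDual ∘ a)
    obtain ⟨μ, hμ⟩ := exists_pad_sortedParts_eq hn antitone_sort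
      ((Equiv.sum_comp σ a).trans ha)
    have map_sort : Multiset.map (a ∘ σ) univ.val = Multiset.map a univ.val := by
      rw [← Multiset.map_map]
      exact congrArg (Multiset.map a) (congrArg Finset.val (Finset.map_univ_equiv σ))
    rw [← map_sort, ← hμ, filter_map_pad_sortedParts hn μ, Finset.sum_eq_single_of_mem μ
      (mem_univ μ) fun ν _ hν => if_neg fun h => hν (Nat.Partition.ext h.symm), if_pos rfl, hμ,
      ← expCoeff_rename_perm, hsymm σ]
  · rw [expCoeff_eq_zero_of_isHomogeneous hP ha, Finset.sum_eq_zero]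
    refine fun μ _ => if_neg fun h => ha ?_
    have sum_eq := congrArg Multiset.sum (Multiset.filter_add_not (· ≠ 0) (Multiset.map a univ.val))
    rw [h, Multiset.sum_add, μ.parts_sum] at sum_eq
    simpa [Multiset.filter_eq', List.sum_ofFn] using sum_eq.symm

end MonomialExpansion

section Tableaux

variable {N : ℕ}

/-- The length of each row of the Young diagram of `lam`, which has no cell outside its first `N`
rows. -/
def rowLength (lam : Fin N → ℕ) (i : ℕ) : ℕ := if h : i < N then lam ⟨i, h⟩ else 0

/-- Semistandard tableaux with row lengths `L`, entries below `N` and content `a`. Entries outside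
of the diagram are `0`, as in `IsSSYT`. -/
structure IsTableau (L : ℕ → ℕ) (a : Fin N → ℕ) (T : ℕ → ℕ → ℕ) : Prop where
  row_le : ∀ i j₁ j₂, j₁ ≤ j₂ → j₂ < L i → T i j₁ ≤ T i j₂
  col_lt : ∀ i₁ i₂ j, i₁ < i₂ → j < L i₂ → T i₁ j < T i₂ j
  eq_zero : ∀ i j, L i ≤ j → T i j = 0
  entry_lt : ∀ i j, j < L i → T i j < N
  content : ∀ k : Fin N, Nat.card {c : ℕ × ℕ // c.2 < L c.1 ∧ T c.1 c.2 = k} = a k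

/-- The diagrams with row lengths `M ⊆ L` differ by a horizontal strip. -/
def IsHorizontalStrip (L M : ℕ → ℕ) : Prop :=
  ∀ i, L (i + 1) ≤ M i ∧ M i ≤ L i

/-- Write the entry `N` in all cells of `L` outside of `M`. -/
def fillStrip (N : ℕ) (L M : ℕ → ℕ) (T : ℕ → ℕ → ℕ) : ℕ → ℕ → ℕ := fun i j =>
  if j < M i then T i j else if j < L i then N else 0

/-- The number of cells of each row of `L` whose entry is less than `N`. -/
def innerLength (N : ℕ) (L : ℕ → ℕ) (T : ℕ → ℕ → ℕ) (i : ℕ) : ℕ :=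
  Nat.count (fun j => T i j < N) (L i)

/-- Remove the entries that are at least `N`. -/
def truncate (N : ℕ) (T : ℕ → ℕ → ℕ) : ℕ → ℕ → ℕ := fun i j => if T i j < N then T i j else 0

lemma lt_count_iff {p : ℕ → Prop} [DecidablePred p] {n : ℕ}
    (hp : ∀ i j, i ≤ j → j < n → p j → p i) {i : ℕ} : i < Nat.count p n ↔ i < n ∧ p i := by
  induction n with
  | zero => simp
  | succ n ih =>
    have ih := ih fun i j hij hj => hp i j hij (hj.trans n.lt_succ_self)
    rw [Nat.count_succ]
    split_ifs with hn
    · have all (j : ℕ) (hj : j < n + 1) : p j := hp j n (Nat.le_of_lt_succ hj) n.lt_succ_self hn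
      rw [Nat.count_iff_forall.2 fun j hj => all j (hj.trans n.lt_succ_self)]
      exact ⟨fun hi => ⟨hi, all i hi⟩, And.left⟩
    · grind

namespace IsTableau

variable {L M : ℕ → ℕ}

lemma isTableau_fillStrip {a : Fin (N + 1) → ℕ} {T : ℕ → ℕ → ℕ}
    (hT : IsTableau M (a ∘ Fin.castSucc) T) (hL : Antitone L) (hLM : IsHorizontalStrip L M)
    (hcard : Nat.card {c : ℕ × ℕ // M c.1 ≤ c.2 ∧ c.2 < L c.1} = a (Fin.last N)) :
    IsTableau L a (fillStrip N L M T) where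
  row_le i j₁ j₂ hj hj₂ := by
    have := hT.row_le i j₁ j₂ hj
    have := hT.entry_lt i j₁
    grind [fillStrip]
  col_lt i₁ i₂ j hi hj := by
    have := (hL (Nat.succ_le_of_lt hi)).trans (hLM i₁).1
    have := hT.col_lt i₁ i₂ j hi
    have := hT.entry_lt i₁ j
    grind [fillStrip]
  eq_zero i j hj := by
    have := (hLM i).2
    grind [fillStrip]
  entry_lt i j hj := by
    have := hT.entry_lt i j
    grind [fillStrip]
  content k := by
    have hML i := (hLM i).2
    induction k using Fin.lastCases with
    | last =>
      refine Eq.trans (Nat.card_congr (Equiv.subtypeEquivRight fun ⟨i, j⟩ => ?_)) hcard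
      have := hML i
      have := hT.entry_lt i j
      grind [fillStrip]
    | cast k =>
      refine (Nat.card_congr (Equiv.subtypeEquivRight fun ⟨i, j⟩ => ?_)).trans (hT.content k)
      have := hML i
      grind [fillStrip, Fin.val_castSucc]

lemma lt_innerLength_iff {a : Fin N → ℕ} {T : ℕ → ℕ → ℕ} (hT : IsTableau L a T) {K i j : ℕ} :
    j < innerLength K L T i ↔ j < L i ∧ T i j < K :=
  lt_count_iff fun j₁ j₂ hj hj₂ h => (hT.row_le i j₁ j₂ hj hj₂).trans_lt h

lemma le_entry {a : Fin N → ℕ} {T : ℕ → ℕ → ℕ} (hT : IsTableau L a T) (hL : Antitone L) {i j : ℕ}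
    (hj : j < L i) : i ≤ T i j := by
  induction i with
  | zero => exact Nat.zero_le _
  | succ i ih =>
    exact (ih (hj.trans_le (hL i.le_succ))).trans_lt (hT.col_lt i (i + 1) j i.lt_succ_self hj)

section Truncate

variable {a : Fin (N + 1) → ℕ} {T : ℕ → ℕ → ℕ}

lemma isHorizontalStrip_innerLength (hT : IsTableau L a T) (hL : Antitone L) :
    IsHorizontalStrip L (innerLength N L T) := by
  refine fun i => ⟨?_, Nat.count_le _⟩
  by_contra! h
  have cell_above : innerLength N L T i < L i := h.trans_le (hL i.le_succ)
  have := hT.col_lt i (i + 1) _ i.lt_succ_self h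
  have := hT.entry_lt (i + 1) _ h
  exact lt_irrefl _ (hT.lt_innerLength_iff.2 ⟨cell_above, by lia⟩)

lemma innerLength_eq_zero (hT : IsTableau L a T) (hL : Antitone L) {i : ℕ} (hi : N ≤ i) :
    innerLength N L T i = 0 := by
  by_contra h
  obtain ⟨cell, entry⟩ := hT.lt_innerLength_iff.1 (Nat.pos_of_ne_zero h)
  exact absurd (hT.le_entry hL cell) (by lia)

lemma isTableau_truncate (hT : IsTableau L a T) :
    IsTableau (innerLength N L T) (a ∘ Fin.castSucc) (truncate N T) where
  row_le i j₁ j₂ hj hj₂ := by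
    have := hT.row_le i j₁ j₂ hj
    grind [truncate, hT.lt_innerLength_iff]
  col_lt i₁ i₂ j hi hj := by
    have := hT.col_lt i₁ i₂ j hi
    grind [truncate, hT.lt_innerLength_iff]
  eq_zero i j hj := by
    have := hT.eq_zero i j
    have := hT.lt_innerLength_iff (K := N) (i := i) (j := j)
    grind [truncate]
  entry_lt i j hj := by
    grind [truncate, hT.lt_innerLength_iff]
  content k := by
    refine (Nat.card_congr (Equiv.subtypeEquivRight fun ⟨i, j⟩ => ?_)).trans
      (hT.content k.castSucc)
    have := hT.lt_innerLength_iff (K := N) (i := i) (j := j)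
    grind [truncate, Fin.val_castSucc]

lemma natCard_strip (hT : IsTableau L a T) :
    Nat.card {c : ℕ × ℕ // innerLength N L T c.1 ≤ c.2 ∧ c.2 < L c.1} = a (Fin.last N) := by
  refine (Nat.card_congr (Equiv.subtypeEquivRight fun ⟨i, j⟩ => ?_)).trans
    (hT.content (Fin.last N))
  have := hT.lt_innerLength_iff (K := N) (i := i) (j := j)
  have := hT.entry_lt i j
  grind

lemma fillStrip_truncate (hT : IsTableau L a T) :
    fillStrip N L (innerLength N L T) (truncate N T) = T := by
  ext i j
  have := hT.lt_innerLength_iff (K := N) (i := i) (j := j)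
  have := hT.entry_lt i j
  have := hT.eq_zero i j
  grind [truncate, fillStrip]

end Truncate

lemma innerLength_fillStrip {a : Fin N → ℕ} {T : ℕ → ℕ → ℕ} (hT : IsTableau M a T)
    (hML : ∀ i, M i ≤ L i) : innerLength N L (fillStrip N L M T) = M := by
  ext i
  rw [innerLength, Nat.count_eq_card_filter_range]
  have : (range (L i)).filter (fun j => fillStrip N L M T i j < N) = range (M i) := by
    ext j
    have := hML i
    have := hT.entry_lt i j
    grind [fillStrip]
  rw [this, card_range]

lemma truncate_fillStrip {a : Fin N → ℕ} {T : ℕ → ℕ → ℕ} (hT : IsTableau M a T) :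
    truncate N (fillStrip N L M T) = T := by
  ext i j
  have := hT.entry_lt i j
  have := hT.eq_zero i j
  grind [truncate, fillStrip]

end IsTableau

section RowLength

lemma antitone_rowLength {lam : Fin N → ℕ} (hlam : Antitone lam) : Antitone (rowLength lam) := by
  intro i j hij
  by_cases hj : j < N
  · simpa [rowLength, hj, hij.trans_lt hj] using hlam (Fin.mk_le_mk.2 hij)
  · simp [rowLength, hj]

lemma rowLength_injective : Function.Injective (rowLength (N := N)) := fun lam mu h =>
  funext fun i => by simpa [rowLength] using congrFun h i

lemma isHorizontalStrip_rowLength_iff {lam : Fin (N + 1) → ℕ} {mu : Fin N → ℕ} :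
    IsHorizontalStrip (rowLength lam) (rowLength mu) ↔ mu ∈ interlacing lam := by
  rw [mem_interlacing]
  constructor
  · intro h j
    have := h j
    simp only [rowLength, j.is_lt, j.is_lt.trans N.lt_succ_self, Nat.succ_lt_succ j.is_lt,
      dite_true] at this
    exact this
  · intro h i
    by_cases hi : i < N
    · simpa [rowLength, hi, hi.trans N.lt_succ_self] using h ⟨i, hi⟩
    · simp [rowLength, hi]

lemma natCard_strip_rowLength {lam : Fin (N + 1) → ℕ} {mu : Fin N → ℕ}
    (hmu : mu ∈ interlacing lam) :
    Nat.card {c : ℕ × ℕ // rowLength mu c.1 ≤ c.2 ∧ c.2 < rowLength lam c.1} =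
      ∑ i, lam i - ∑ i, mu i := by
  let cells : Finset (ℕ × ℕ) :=
    ((range (N + 1)).sigma fun i => Ico (rowLength mu i) (rowLength lam i)).map
      (Equiv.sigmaEquivProd ℕ ℕ).toEmbedding
  have mem_cells (c : ℕ × ℕ) :
      c ∈ cells ↔ rowLength mu c.1 ≤ c.2 ∧ c.2 < rowLength lam c.1 := by
    have : rowLength mu c.1 ≤ c.2 ∧ c.2 < rowLength lam c.1 → c.1 < N + 1 := by
      grind [rowLength]
    simpa [cells, Finset.mem_map_equiv] using this
  rw [Nat.subtype_card cells mem_cells, Finset.card_map, Finset.card_sigma,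
    sum_sub_sum_of_mem_interlacing hmu, Finset.sum_range_succ, Finset.sum_range]
  simp [rowLength, add_comm, Fin.last, Fin.castSucc, Fin.castAdd, Fin.castLE]

lemma rowLength_restrict {M : ℕ → ℕ} (hM : ∀ i, N ≤ i → M i = 0) :
    rowLength (fun i : Fin N => M i) = M := by
  ext i
  grind [rowLength]

end RowLength

end Tableaux

section TableauxCount

variable {N : ℕ}

/-- The partitions left when the cells with the last entry are removed from a tableau of shape
`lam` and content `a`. -/
def innerShapes (lam a : Fin (N + 1) → ℕ) : Finset (Fin N → ℕ) :=
  (interlacing lam).filter fun mu => ∑ i, lam i - ∑ i, mu i = a (Fin.last N)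

/-- A tableau amounts to the tableau of its entries other than the last one, whose shape
interlaces with the original shape. -/
noncomputable def sigmaInnerShapesEquiv {lam : Fin (N + 1) → ℕ} (hlam : Antitone lam)
    (a : Fin (N + 1) → ℕ) :
    (Σ mu : innerShapes lam a, {T // IsTableau (rowLength mu.1) (a ∘ Fin.castSucc) T}) ≃
      {T // IsTableau (rowLength lam) a T} := by
  have strip (mu : innerShapes lam a) : IsHorizontalStrip (rowLength lam) (rowLength mu.1) :=
    isHorizontalStrip_rowLength_iff.2 (mem_filter.1 mu.2).1
  refine Equiv.ofBijective (fun P => ⟨fillStrip N (rowLength lam) (rowLength P.1.1) P.2.1,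
    P.2.2.isTableau_fillStrip (antitone_rowLength hlam) (strip P.1) ?_⟩) ⟨?_, ?_⟩
  · have := mem_filter.1 P.1.2
    rw [natCard_strip_rowLength this.1, this.2]
  · rintro ⟨mu, T, hT⟩ ⟨mu', T', hT'⟩ h
    simp only [Subtype.mk.injEq] at h
    have shape : rowLength mu.1 = rowLength mu'.1 := by
      rw [← hT.innerLength_fillStrip fun i => (strip mu i).2, h,
        hT'.innerLength_fillStrip fun i => (strip mu' i).2]
    obtain rfl : mu = mu' := Subtype.ext (rowLength_injective shape)
    obtain rfl : T = T' := by rw [← hT.truncate_fillStrip, h, hT'.truncate_fillStrip]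
    rfl
  · rintro ⟨T, hT⟩
    have shape := rowLength_restrict fun _ => hT.innerLength_eq_zero (antitone_rowLength hlam)
    set mu : Fin N → ℕ := fun i => innerLength N (rowLength lam) T i
    have mu_mem : mu ∈ interlacing lam := isHorizontalStrip_rowLength_iff.1 <| by
      rw [shape]
      exact hT.isHorizontalStrip_innerLength (antitone_rowLength hlam)
    refine ⟨⟨⟨mu, mem_filter.2 ⟨mu_mem, ?_⟩⟩, truncate N T, ?_⟩, Subtype.ext ?_⟩
    · rw [← natCard_strip_rowLength mu_mem, shape, hT.natCard_strip]
    · rw [shape]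
      exact hT.isTableau_truncate
    · simp only [shape]
      exact hT.fillStrip_truncate

lemma expCoeff_gtSchur_succ {lam : Fin (N + 1) → ℕ} (a : Fin (N + 1) → ℕ) :
    expCoeff a (gtSchur lam (X : _ → MvPolynomial (Fin (N + 1)) ℤ)) =
      ∑ mu ∈ innerShapes lam a, expCoeff (a ∘ Fin.castSucc) (gtSchur mu X) := by
  have renamed (mu : Fin N → ℕ) :
      gtSchur mu (X ∘ Fin.castSucc : _ → MvPolynomial (Fin (N + 1)) ℤ) =
        rename Fin.castSucc (gtSchur mu X) := by
    rw [← AlgHom.coe_toRingHom, map_gtSchur]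
    congr 1
    ext1 i
    simp
  simp only [gtSchur, map_sum, renamed, expCoeff_X_last_pow_mul_rename_castSucc, innerShapes,
    sum_filter, eq_comm]

theorem natCard_isTableau {lam : Fin N → ℕ} (hlam : Antitone lam) (a : Fin N → ℕ) :
    Finite {T // IsTableau (rowLength lam) a T} ∧
      (Nat.card {T // IsTableau (rowLength lam) a T} : ℤ) = expCoeff a (gtSchur lam X) := by
  induction N with
  | zero =>
    have : Unique {T // IsTableau (rowLength lam) a T} :=
      { default := ⟨0, by constructor <;> simp [rowLength]⟩
        uniq := fun T => Subtype.ext <| by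
          ext i j
          exact T.2.eq_zero i j (by simp [rowLength]) }
    refine ⟨inferInstance, ?_⟩
    simp [gtSchur, expCoeff, Subsingleton.elim (Finsupp.equivFunOnFinite.symm a) 0]
  | succ N ih =>
    have ih (mu : innerShapes lam a) :=
      ih (antitone_of_mem_interlacing hlam (mem_filter.1 mu.2).1) (a ∘ Fin.castSucc)
    have (mu : innerShapes lam a) := (ih mu).1
    let e := sigmaInnerShapesEquiv hlam a
    refine ⟨Finite.of_equiv _ e, ?_⟩
    rw [← Nat.card_congr e, Nat.card_sigma, expCoeff_gtSchur_succ, Nat.cast_sum,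
      ← sum_coe_sort (innerShapes lam a)]
    exact sum_congr rfl fun mu _ => (ih mu).2

end TableauxCount

section SchurPolynomial

variable {N n : ℕ}

lemma rowLength_pad {l : List ℕ} (hl : l.length ≤ N) (i : ℕ) :
    rowLength (pad N l) i = l.getD i 0 := by
  rw [rowLength]
  split_ifs with hi
  · rfl
  · rw [List.getD_eq_default _ _ (hl.trans (not_lt.1 hi))]

lemma finite_cells (l : List ℕ) : {c : ℕ × ℕ | c.2 < l.getD c.1 0}.Finite := by
  refine (range l.length ×ˢ range (l.sum + 1)).finite_toSet.subset fun c hc => ?_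
  have row : c.1 < l.length := by
    by_contra! h
    simp [h] at hc
  have := List.le_sum_of_mem (List.getElem_mem row)
  rw [Set.mem_ofPred_eq, List.getD_eq_getElem _ _ row] at hc
  simpa [row] using by lia

lemma isTableau_pad_iff {l ν : List ℕ} (hl : l.length ≤ N) (hν : ν.length ≤ N)
    (T : ℕ → ℕ → ℕ) :
    IsTableau (rowLength (pad N l)) (pad N ν) T ↔ IsSSYT l T ∧ HasContent l T ν := by
  have rows : rowLength (pad N l) = fun i => l.getD i 0 := funext (rowLength_pad hl)
  rw [rows]
  constructor
  · intro hT
    refine ⟨⟨hT.row_le, hT.col_lt, hT.eq_zero⟩, fun k => ?_⟩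
    by_cases hk : k < N
    · exact hT.content ⟨k, hk⟩
    · rw [List.getD_eq_default _ _ (hν.trans (not_lt.1 hk))]
      have : IsEmpty {c : ℕ × ℕ // c.2 < l.getD c.1 0 ∧ T c.1 c.2 = k} :=
        ⟨fun c => hk (c.2.2 ▸ hT.entry_lt _ _ c.2.1)⟩
      exact Nat.card_of_isEmpty
  · rintro ⟨⟨row_le, col_lt, eq_zero⟩, content⟩
    refine ⟨row_le, col_lt, eq_zero, fun i j hj => ?_, fun k => content k⟩
    by_contra! hT
    have no_cells := content (T i j)
    rw [List.getD_eq_default _ _ (hν.trans hT)] at no_cells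
    have : Finite {c : ℕ × ℕ // c.2 < l.getD c.1 0 ∧ T c.1 c.2 = T i j} :=
      ((finite_cells l).subset fun c hc => hc.1).to_subtype
    exact (Finite.card_eq_zero_iff.1 no_cells).false ⟨(i, j), hj, rfl⟩

theorem kostka_eq_expCoeff_gtSchur {l ν : List ℕ} (hl : l.Pairwise (· ≥ ·)) (hlN : l.length ≤ N)
    (hν : ν.length ≤ N) : (kostka l ν : ℤ) = expCoeff (pad N ν) (gtSchur (pad N l) X) := by
  rw [← (natCard_isTableau (antitone_pad hl) (pad N ν)).2, kostka]
  exact congrArg Nat.cast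
    (Nat.card_congr (Equiv.subtypeEquivRight fun T => (isTableau_pad_iff hlN hν T).symm))

theorem schurP_eq_gtSchur (hn : n ≤ N) (μ : n.Partition) :
    schurP N n (sortedParts μ) = gtSchur (pad N (sortedParts μ)) X := by
  have length_le (ν : n.Partition) := (length_sortedParts_le ν).trans hn
  have hlam := antitone_pad (N := N) (pairwise_sortedParts μ)
  have homogeneous : (gtSchur (pad N (sortedParts μ))
      (X : _ → MvPolynomial (Fin N) ℤ)).IsHomogeneous n := by
    simpa [sum_pad (length_le μ), sum_sortedParts] using
      isHomogeneous_gtSchur (pad N (sortedParts μ)) (isHomogeneous_X ℤ)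
  rw [eq_sum_msymmList hn (isSymmetric_gtSchur hlam) homogeneous, schurP]
  exact sum_congr rfl fun ν _ => by
    rw [kostka_eq_expCoeff_gtSchur (pairwise_sortedParts μ) (length_le μ) (length_le ν)]

end SchurPolynomial

section Frobenius

lemma isHomogeneous_alternant {ι R : Type*} [CommRing R] {N : ℕ} (b : Fin N → ℕ)
    {x : Fin N → MvPolynomial ι R} (hx : ∀ i, (x i).IsHomogeneous 1) :
    (alternant b x).IsHomogeneous (∑ i, b i) := by
  rw [alternant, Matrix.det_apply]
  refine IsHomogeneous.sum _ _ _ fun σ _ => ?_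
  rw [Units.smul_def]
  refine (homogeneousSubmodule ι R _).smul_of_tower_mem _ (IsHomogeneous.prod _ _ _ fun i _ => ?_)
  simpa using (hx (σ i)).pow (b i)

variable {N n : ℕ}

lemma exists_antitone_add_staircase_eq {b : Fin N → ℕ} (hb : StrictAnti b) :
    ∃ lam : Fin N → ℕ, Antitone lam ∧ lam + staircase N = b := by
  cases N with
  | zero => exact ⟨0, Subsingleton.antitone _, Subsingleton.elim _ _⟩
  | succ N =>
    have step (i : Fin N) : b i.succ < b i.castSucc := hb (Fin.castSucc_lt_succ)
    have staircase_le (i : Fin (N + 1)) : staircase (N + 1) i ≤ b i := by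
      induction i using Fin.reverseInduction with
      | last => simp
      | cast i ih =>
        have := step i
        simp only [staircase_succ, staircase_castSucc] at ih ⊢
        lia
    refine ⟨b - staircase (N + 1), Fin.antitone_iff_succ_le.2 fun i => ?_,
      tsub_add_cancel_of_le staircase_le⟩
    have := step i
    simp only [Pi.sub_apply, staircase_succ, staircase_castSucc]
    lia

/-- The coefficient of `x^b` in `a_δ P`. For `b = lam + δ` and a symmetric polynomial `P`, it is the
coefficient of `s_lam` in the Schur expansion of `P`. -/
noncomputable def schurCoeff (b : Fin N → ℕ) : MvPolynomial (Fin N) ℤ →ₗ[ℤ] ℤ :=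
  expCoeff b ∘ₗ LinearMap.mulLeft ℤ (alternant (staircase N) X)

lemma schurCoeff_apply (b : Fin N → ℕ) (P : MvPolynomial (Fin N) ℤ) :
    schurCoeff b P = expCoeff b (alternant (staircase N) X * P) :=
  rfl

theorem eq_sum_schurP (hn : n ≤ N) {P : MvPolynomial (Fin N) ℤ} (hsymm : P.IsSymmetric)
    (hP : P.IsHomogeneous n) :
    P = ∑ μ : n.Partition,
      schurCoeff (pad N (sortedParts μ) + staircase N) P • schurP N n (sortedParts μ) := by
  have strictAnti_add {lam : Fin N → ℕ} (hlam : Antitone lam) : StrictAnti (lam + staircase N) :=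
    hlam.add_strictAnti staircase_strictAnti
  have antitone_pad_sortedParts (μ : n.Partition) := antitone_pad (N := N) (pairwise_sortedParts μ)
  refine mul_left_cancel₀ alternant_staircase_ne_zero ?_
  simp only [mul_sum, mul_smul_comm, schurP_eq_gtSchur hn,
    ← alternant_add_staircase (antitone_pad_sortedParts _)]
  refine ((isAlternating_alternant _).mul_isSymmetric hsymm).ext
    (.sum fun μ _ => (isAlternating_alternant _).zsmul _) fun b hb => ?_
  obtain ⟨lam, hlam, rfl⟩ := exists_antitone_add_staircase_eq hb
  simp only [map_sum, map_smul, expCoeff_alternant_of_strictAnti (strictAnti_add hlam)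
    (strictAnti_add (antitone_pad_sortedParts _)), add_left_inj, smul_eq_mul, mul_ite, mul_one,
    mul_zero]
  by_cases hsum : ∑ i, lam i = n
  · obtain ⟨μ, rfl⟩ := exists_pad_sortedParts_eq hn hlam hsum
    simp [(pad_sortedParts_injective hn).eq_iff, schurCoeff_apply]
  · have homogeneous := (isHomogeneous_alternant (staircase N) (isHomogeneous_X ℤ)).mul hP
    rw [expCoeff_eq_zero_of_isHomogeneous homogeneous, Finset.sum_eq_zero]
    · rintro μ -
      refine if_neg fun h => hsum ?_
      rw [h, sum_pad ((length_sortedParts_le μ).trans hn), sum_sortedParts]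
    · simpa [sum_add_distrib, add_comm] using hsum

end Frobenius

section Stability

variable {N : ℕ}

lemma killCompl_castSucc_comp_X {R : Type*} [CommSemiring R] :
    killCompl (Fin.castSucc_injective N) ∘ X =
      (Fin.snoc X 0 : Fin (N + 1) → MvPolynomial (Fin N) R) := by
  ext1 i
  induction i using Fin.lastCases with
  | last => simp [killCompl]
  | cast i => simpa using killCompl_rename_app (Fin.castSucc_injective N) (X i)

lemma killCompl_castSucc_psum {R : Type*} [CommSemiring R] {r : ℕ} (hr : 0 < r) :
    killCompl (Fin.castSucc_injective N) (psum (Fin (N + 1)) R r) = psum (Fin N) R r := by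
  simp_rw [psum, map_sum, map_pow, ← Function.comp_apply (g := X), killCompl_castSucc_comp_X]
  simp [Fin.sum_univ_castSucc, hr.ne']

lemma killCompl_castSucc_powerSum {l : List ℕ} (hl : ∀ r ∈ l, 0 < r) :
    killCompl (Fin.castSucc_injective N) (powerSum (N + 1) l) = powerSum N l := by
  rw [powerSum, map_list_prod, List.map_map]
  exact congrArg List.prod (List.map_congr_left fun r hr => killCompl_castSucc_psum (hl r hr))

lemma killCompl_castSucc_alternant_staircase {R : Type*} [CommRing R] :
    killCompl (Fin.castSucc_injective N)
        (alternant (staircase (N + 1)) (X : _ → MvPolynomial (Fin (N + 1)) R)) =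
      (∏ i, X i) * alternant (staircase N) X := by
  rw [← AlgHom.coe_toRingHom, map_alternant, alternant_staircase_succ, AlgHom.coe_toRingHom,
    killCompl_castSucc_comp_X]
  simp [Function.comp_def]

lemma schurCoeff_snoc (b : Fin N → ℕ) (P : MvPolynomial (Fin (N + 1)) ℤ) :
    schurCoeff (Fin.snoc (b + 1) 0 : Fin (N + 1) → ℕ) P =
      schurCoeff b (killCompl (Fin.castSucc_injective N) P) := by
  rw [schurCoeff_apply, schurCoeff_apply, ← expCoeff_killCompl_castSucc, map_mul,
    killCompl_castSucc_alternant_staircase, mul_assoc]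
  simpa using expCoeff_add_prod_X_pow_mul b 1
    (alternant (staircase N) X * killCompl (Fin.castSucc_injective N) P)

lemma pad_succ_add_staircase {l : List ℕ} (hl : l.length ≤ N) :
    pad (N + 1) l + staircase (N + 1) = Fin.snoc (pad N l + staircase N + 1) 0 := by
  ext i
  induction i using Fin.lastCases with
  | last => simp [pad, hl]
  | cast i => simp [pad, add_assoc]

/-- Frobenius' formula for the value on the class of cycle type `l` of the irreducible character
of the symmetric group `S_n` indexed by the partition `s`. -/
noncomputable def frobeniusChar (n : ℕ) (l s : List ℕ) : ℤ :=
  schurCoeff (pad n s + staircase n) (powerSum n l)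

lemma schurCoeff_powerSum_eq_frobeniusChar {n : ℕ} (hn : n ≤ N) {l s : List ℕ}
    (hl : ∀ r ∈ l, 0 < r) (hs : s.length ≤ n) :
    schurCoeff (pad N s + staircase N) (powerSum N l) = frobeniusChar n l s := by
  induction N, hn using Nat.le_induction with
  | base => rfl
  | succ N hn ih =>
    rw [pad_succ_add_staircase (hs.trans hn), schurCoeff_snoc, killCompl_castSucc_powerSum hl, ih]

lemma isSymmetric_powerSum (l : List ℕ) : (powerSum N l).IsSymmetric := by
  refine (mem_symmetricSubalgebra _).1 (list_prod_mem fun P hP => ?_)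
  obtain ⟨r, -, rfl⟩ := List.mem_map.1 hP
  exact psum_isSymmetric (Fin N) ℤ r

lemma isHomogeneous_powerSum (l : List ℕ) : (powerSum N l).IsHomogeneous l.sum := by
  induction l with
  | nil => exact isHomogeneous_one _ _
  | cons r l ih =>
    have factor : (∑ i : Fin N, (X i : MvPolynomial (Fin N) ℤ) ^ r).IsHomogeneous r :=
      IsHomogeneous.sum _ _ _ fun i _ => isHomogeneous_X_pow i r
    simpa [powerSum] using factor.mul ih

theorem powerSum_eq_sum_schurP {n : ℕ} (hn : n ≤ N) {l : List ℕ} (hl : ∀ r ∈ l, 0 < r)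
    (hsum : l.sum = n) :
    powerSum N l = ∑ μ : n.Partition,
      frobeniusChar n l (sortedParts μ) • schurP N n (sortedParts μ) := by
  simp_rw [← schurCoeff_powerSum_eq_frobeniusChar hn hl (length_sortedParts_le _)]
  exact eq_sum_schurP hn (isSymmetric_powerSum l) (hsum ▸ isHomogeneous_powerSum l)

theorem exists_sum_powerSum_eq_sum_schurP {n : ℕ} {L : Multiset (List ℕ)}
    (hL : ∀ l ∈ L, (∀ r ∈ l, 0 < r) ∧ l.sum = n)
    (nonneg : ∀ μ : n.Partition, 0 ≤ (L.map fun l => frobeniusChar n l (sortedParts μ)).sum) :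
    ∃ c : n.Partition → ℕ, ∀ N, n ≤ N →
      (L.map (powerSum N)).sum = ∑ μ, (c μ : ℤ) • schurP N n (sortedParts μ) := by
  refine ⟨fun μ => (L.map fun l => frobeniusChar n l (sortedParts μ)).sum.toNat, fun N hN => ?_⟩
  simp_rw [Int.toNat_of_nonneg (nonneg _), Multiset.sum_smul, Multiset.map_map,
    Function.comp_apply, ← Multiset.sum_map_sum]
  exact congrArg Multiset.sum (Multiset.map_congr rfl fun l hl =>
    powerSum_eq_sum_schurP hN (hL l hl).1 (hL l hl).2)

end Stability

section UpperBound

variable {N : ℕ}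

lemma psum_mul_alternant {R : Type*} [CommRing R] (r : ℕ) (b : Fin N → ℕ) :
    psum (Fin N) R r * alternant b X = ∑ j, alternant (Function.update b j (b j + r)) X :=
  sum_pow_mul_alternant r b X

lemma sum_sq_update_add (c : Fin N → ℕ) (j : Fin N) (r : ℕ) :
    ∑ i, Function.update c j (c j + r) i ^ 2 = ∑ i, c i ^ 2 + (2 * c j * r + r ^ 2) := by
  have term (i : Fin N) : Function.update c j (c j + r) i ^ 2 =
      c i ^ 2 + if i = j then 2 * c j * r + r ^ 2 else 0 := by
    obtain rfl | hij := eq_or_ne i j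
    · simp only [Function.update_self, if_true]
      ring
    · simp [hij]
  simp [term, sum_add_distrib]

-- A second term with the same leading monomial is excluded since `∑ i, b i ^ 2` determines the
-- entry of `c` that has been increased.
lemma abs_expCoeff_psum_mul_alternant_le_one {r : ℕ} (hr : 0 < r) (b : Fin N → ℕ)
    {c : Fin N → ℕ} (hc : Function.Injective c) :
    |expCoeff b (psum (Fin N) ℤ r * alternant c X)| ≤ 1 := by
  rw [psum_mul_alternant, map_sum]
  have sum_sq {j : Fin N}
      (hj : expCoeff b (alternant (Function.update c j (c j + r))
        (X : _ → MvPolynomial (Fin N) ℤ)) ≠ 0) :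
      ∑ i, b i ^ 2 = ∑ i, c i ^ 2 + (2 * c j * r + r ^ 2) := by
    obtain ⟨σ, hσ⟩ := exists_comp_perm_eq_of_expCoeff_alternant_ne_zero hj
    rw [← sum_sq_update_add, ← hσ]
    exact (Equiv.sum_comp σ fun i => b i ^ 2).symm
  by_cases h : ∃ j, expCoeff b (alternant (Function.update c j (c j + r))
      (X : _ → MvPolynomial (Fin N) ℤ)) ≠ 0
  · obtain ⟨j, hj⟩ := h
    rw [Finset.sum_eq_single_of_mem j (mem_univ j)]
    · exact abs_expCoeff_alternant_le_one _ _
    · intro k _ hkj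
      by_contra hk
      have : c k * r = c j * r := by linarith [sum_sq hj, sum_sq hk]
      exact hkj (hc (Nat.eq_of_mul_eq_mul_right hr this))
  · simp only [not_exists, not_not] at h
    simp [h]

lemma alternant_update_succ_eq_zero {R : Type*} [CommRing R] {b : Fin N → ℕ} {j k : Fin N}
    (hjk : k ≠ j) (h : b j + 1 = b k) (x : Fin N → R) :
    alternant (Function.update b j (b j + 1)) x = 0 := by
  refine alternant_eq_zero_of_not_injective (fun hinj => hjk (hinj ?_)) x
  rw [Function.update_self, Function.update_of_ne hjk, h]

lemma psum_one_mul_alternant_staircase {R : Type*} [CommRing R] :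
    psum (Fin (N + 1)) R 1 * alternant (staircase (N + 1)) X =
      alternant (pad (N + 1) [1] + staircase (N + 1)) X := by
  rw [psum_mul_alternant, Fin.sum_univ_succ, Finset.sum_eq_zero, add_zero]
  · congr 1
    ext i
    cases i using Fin.cases <;> simp [pad, add_comm]
  · exact fun i _ =>
      alternant_update_succ_eq_zero (k := i.castSucc) Fin.castSucc_lt_succ.ne (by simp) X

lemma psum_one_mul_psum_one_mul_alternant_staircase {R : Type*} [CommRing R] :
    psum (Fin (N + 2)) R 1 * (psum (Fin (N + 2)) R 1 * alternant (staircase (N + 2)) X) =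
      alternant (pad (N + 2) [2] + staircase (N + 2)) X +
        alternant (pad (N + 2) [1, 1] + staircase (N + 2)) X := by
  have add_to_first : Function.update (pad (N + 2) [1] + staircase (N + 2)) 0
      ((pad (N + 2) [1] + staircase (N + 2)) 0 + 1) = pad (N + 2) [2] + staircase (N + 2) := by
    ext i
    cases i using Fin.cases <;> simp [pad, add_right_comm]
  have add_to_second : Function.update (pad (N + 2) [1] + staircase (N + 2)) 1
      ((pad (N + 2) [1] + staircase (N + 2)) 1 + 1) = pad (N + 2) [1, 1] + staircase (N + 2) := by
    ext i
    refine Fin.cases ?_ (Fin.cases ?_ fun i => ?_) i <;>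
      simp [pad, Fin.succ_succ_ne_one, add_comm]
  rw [psum_one_mul_alternant_staircase, psum_mul_alternant, Fin.sum_univ_succ,
    Fin.sum_univ_succ, Finset.sum_eq_zero, add_zero, Fin.succ_zero_eq_one, add_to_first,
    add_to_second]
  exact fun i _ => alternant_update_succ_eq_zero (k := i.succ.castSucc)
    Fin.castSucc_lt_succ.ne (by simp [pad]) X

theorem abs_frobeniusChar_hook_le_two {n r : ℕ} (hn : 2 ≤ n) (hr : 0 < r) (s : List ℕ) :
    |frobeniusChar n [r, 1, 1] s| ≤ 2 := by
  obtain ⟨N, rfl⟩ := Nat.exists_eq_add_of_le' hn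
  have factors : alternant (staircase (N + 2)) X * powerSum (N + 2) [r, 1, 1] =
      psum (Fin (N + 2)) ℤ r * alternant (pad (N + 2) [2] + staircase (N + 2)) X +
        psum (Fin (N + 2)) ℤ r * alternant (pad (N + 2) [1, 1] + staircase (N + 2)) X := by
    rw [← mul_add, ← psum_one_mul_psum_one_mul_alternant_staircase]
    simp only [powerSum, psum, List.map_cons, List.map_nil, List.prod_cons, List.prod_nil]
    ring
  have injective {l : List ℕ} (hl : l.Pairwise (· ≥ ·)) :
      Function.Injective (pad (N + 2) l + staircase (N + 2)) :=
    ((antitone_pad hl).add_strictAnti staircase_strictAnti).injective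
  rw [frobeniusChar, schurCoeff_apply, factors, map_add]
  refine (abs_add_le _ _).trans ((add_le_add ?_ ?_).trans_eq one_add_one_eq_two) <;>
    exact abs_expCoeff_psum_mul_alternant_le_one hr _ (injective (by simp))

end UpperBound

section LowerBound

variable {N : ℕ}

lemma schurCoeff_psum_mul (b : Fin N → ℕ) (r : ℕ) (P : MvPolynomial (Fin N) ℤ) :
    schurCoeff b (psum (Fin N) ℤ r * P) =
      ∑ i, if r ≤ b i then schurCoeff (Function.update b i (b i - r)) P else 0 := by
  simp only [schurCoeff_apply, mul_left_comm _ (psum (Fin N) ℤ r), expCoeff_psum_mul]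

lemma schurCoeff_eq_zero {P : MvPolynomial (Fin N) ℤ} (hP : P.IsSymmetric) {b : Fin N → ℕ}
    (hb : ¬ Function.Injective b) : schurCoeff b P = 0 :=
  ((isAlternating_alternant _).mul_isSymmetric hP).expCoeff_eq_zero hb

lemma strictAnti_update_pred {b : Fin N → ℕ} (hb : StrictAnti b) {i : Fin N}
    (hinj : Function.Injective (Function.update b i (b i - 1))) :
    StrictAnti (Function.update b i (b i - 1)) := by
  refine Antitone.strictAnti_of_injective (fun j k hjk => ?_) hinj
  obtain rfl | hjk := hjk.eq_or_lt
  · rfl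
  have := hb hjk
  obtain rfl | hj := eq_or_ne j i
  · rw [Function.update_self, Function.update_of_ne hjk.ne']
    lia
  · rw [Function.update_of_ne hj]
    obtain rfl | hk := eq_or_ne k i
    · rw [Function.update_self]
      lia
    · rw [Function.update_of_ne hk]
      exact this.le

lemma sum_update_pred_add_one {b : Fin N → ℕ} {i : Fin N} (hi : 1 ≤ b i) :
    ∑ j, Function.update b i (b i - 1) j + 1 = ∑ j, b j := by
  rw [Finset.sum_update_of_mem (mem_univ i), sdiff_singleton_eq_erase,
    ← Finset.add_sum_erase univ b (mem_univ i)]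
  lia

-- `i` is the last row of the corresponding partition, which always ends in a removable cell.
lemma exists_injective_update_pred {b : Fin N → ℕ} (hb : StrictAnti b)
    (hsum : ∑ i, staircase N i < ∑ i, b i) :
    ∃ i, 1 ≤ b i ∧ Function.Injective (Function.update b i (b i - 1)) := by
  obtain ⟨k, -, hk⟩ := Finset.exists_lt_of_sum_lt hsum
  obtain ⟨i, hi, last⟩ := (univ.filter fun i => staircase N i < b i).exists_max_image id
    ⟨k, by simpa using hk⟩
  simp only [mem_filter, mem_univ, true_and, id] at hi last
  have ne_pred {j : Fin N} (hj : j ≠ i) : b j ≠ b i - 1 := by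
    obtain hij | hij := hj.lt_or_gt
    · have := hb hij
      lia
    · have := staircase_strictAnti hij
      have := mt (last j) hij.not_ge
      lia
  refine ⟨i, Nat.one_le_of_lt hi, fun j k hjk => ?_⟩
  obtain rfl | hj := eq_or_ne i j <;> obtain rfl | hk := eq_or_ne i k
  · rfl
  · rw [Function.update_self, Function.update_of_ne hk.symm] at hjk
    exact absurd hjk.symm (ne_pred hk.symm)
  · rw [Function.update_self, Function.update_of_ne hj.symm] at hjk
    exact absurd hjk (ne_pred hj.symm)
  · rw [Function.update_of_ne hj.symm, Function.update_of_ne hk.symm] at hjk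
    exact hb.injective hjk

theorem le_schurCoeff_psum_one_mul {k : ℤ} (hk : 0 ≤ k) {d : ℕ} (hd : ∑ i, staircase N i ≤ d)
    {P : MvPolynomial (Fin N) ℤ} (hP : P.IsSymmetric)
    (h : ∀ b, StrictAnti b → ∑ i, b i = d → k ≤ schurCoeff b P)
    {b : Fin N → ℕ} (hb : StrictAnti b) (hsum : ∑ i, b i = d + 1) :
    k ≤ schurCoeff b (psum (Fin N) ℤ 1 * P) := by
  have le_term {i : Fin N} (hi : 1 ≤ b i)
      (hinj : Function.Injective (Function.update b i (b i - 1))) :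
      k ≤ schurCoeff (Function.update b i (b i - 1)) P :=
    h _ (strictAnti_update_pred hb hinj) (by linarith [sum_update_pred_add_one hi])
  obtain ⟨i, hi, hinj⟩ := exists_injective_update_pred hb (by lia)
  have term_nonneg (j : Fin N) :
      0 ≤ if 1 ≤ b j then schurCoeff (Function.update b j (b j - 1)) P else 0 := by
    split_ifs with hj
    · by_cases hinj : Function.Injective (Function.update b j (b j - 1))
      · exact hk.trans (le_term hj hinj)
      · rw [schurCoeff_eq_zero hP hinj]
    · rfl
  calc
    k ≤ if 1 ≤ b i then schurCoeff (Function.update b i (b i - 1)) P else 0 := by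
      rw [if_pos hi]
      exact le_term hi hinj
    _ ≤ ∑ j, if 1 ≤ b j then schurCoeff (Function.update b j (b j - 1)) P else 0 :=
      Finset.single_le_sum (fun j _ => term_nonneg j) (mem_univ i)
    _ = schurCoeff b (psum (Fin N) ℤ 1 * P) := (schurCoeff_psum_mul b 1 P).symm

end LowerBound

section Evaluation

variable {N : ℕ}

/-- Evaluates `schurCoeff b (powerSum N l)`: lower an exponent by each part of `l` in turn until a
rearrangement of the staircase is left, which contributes its sign. -/
def evalSchurCoeff : List ℕ → (Fin N → ℕ) → ℤ
  | [], b => if ∀ i, b i < N then ∏ i, ∏ j ∈ Ioi i, (b i - b j : ℤ).sign else 0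
  | r :: l, b => ∑ i, if r ≤ b i then evalSchurCoeff l (Function.update b i (b i - r)) else 0

lemma schurCoeff_staircase_comp_perm (τ : Equiv.Perm (Fin N)) :
    schurCoeff (staircase N ∘ τ) 1 = Equiv.Perm.sign τ := by
  rw [schurCoeff_apply, mul_one, (isAlternating_alternant _).expCoeff_comp_perm,
    expCoeff_alternant_of_strictAnti staircase_strictAnti staircase_strictAnti, if_pos rfl, mul_one]

lemma sign_eq_prod_sign_sub (τ : Equiv.Perm (Fin N)) :
    (Equiv.Perm.sign τ : ℤ) =
      ∏ i, ∏ j ∈ Ioi i, (staircase N (τ i) - staircase N (τ j) : ℤ).sign := by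
  rw [Equiv.Perm.sign_eq_prod_prod_Ioi]
  push_cast
  refine prod_congr rfl fun i _ => prod_congr rfl fun j hj => ?_
  obtain h | h := (τ.injective.ne (mem_Ioi.1 hj).ne).lt_or_gt
  · have := staircase_strictAnti h
    rw [if_pos h, Int.sign_eq_one_of_pos (by lia), Units.val_one]
  · have := staircase_strictAnti h
    rw [if_neg h.not_gt, Int.sign_eq_neg_one_of_neg (by lia), Units.val_neg, Units.val_one]

lemma exists_staircase_comp_perm_eq {b : Fin N → ℕ} (hb : Function.Injective b)
    (hlt : ∀ i, b i < N) : ∃ τ : Equiv.Perm (Fin N), staircase N ∘ τ = b := by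
  have bijective : Function.Bijective fun i => Fin.rev ⟨b i, hlt i⟩ :=
    Finite.injective_iff_bijective.1 fun i j h =>
      hb (congrArg Fin.val (Fin.rev_injective h))
  exact ⟨Equiv.ofBijective _ bijective, funext fun i => congrArg Fin.val (Fin.rev_rev _)⟩

lemma schurCoeff_one (b : Fin N → ℕ) :
    schurCoeff b 1 =
      if ∀ i, b i < N then ∏ i, ∏ j ∈ Ioi i, (b i - b j : ℤ).sign else 0 := by
  split_ifs with hlt
  · by_cases hb : Function.Injective b
    · obtain ⟨τ, rfl⟩ := exists_staircase_comp_perm_eq hb hlt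
      rw [schurCoeff_staircase_comp_perm, sign_eq_prod_sign_sub]
      rfl
    · obtain ⟨i, j, hij, hne⟩ : ∃ i j, b i = b j ∧ i < j := by
        obtain ⟨i, j, hij, hne⟩ := Function.not_injective_iff.1 hb
        obtain h | h := hne.lt_or_gt
        exacts [⟨i, j, hij, h⟩, ⟨j, i, hij.symm, h⟩]
      rw [schurCoeff_eq_zero IsSymmetric.one hb, prod_eq_zero (mem_univ i)]
      exact prod_eq_zero (mem_Ioi.2 hne) (by rw [hij, sub_self, Int.sign_zero])
  · by_contra h
    rw [schurCoeff_apply, mul_one] at h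
    obtain ⟨σ, hσ⟩ := exists_comp_perm_eq_of_expCoeff_alternant_ne_zero h
    refine hlt fun i => ?_
    have := congrFun hσ (σ.symm i)
    rw [Function.comp_apply, σ.apply_symm_apply] at this
    exact this ▸ (Fin.rev _).isLt

lemma schurCoeff_powerSum (l : List ℕ) (b : Fin N → ℕ) :
    schurCoeff b (powerSum N l) = evalSchurCoeff l b := by
  induction l generalizing b with
  | nil => exact schurCoeff_one b
  | cons r l ih =>
    have : powerSum N (r :: l) = psum (Fin N) ℤ r * powerSum N l := rfl
    rw [this, schurCoeff_psum_mul, evalSchurCoeff]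
    simp only [ih]

end Evaluation

section Interval

variable {N n : ℕ}

/-- The partitions of `n` below `(3, 1^{n-3})` in the dominance order, for `4 ≤ n`. -/
def dominanceInterval (n : ℕ) : Multiset (List ℕ) :=
  {List.replicate n 1, 2 :: List.replicate (n - 2) 1, 2 :: 2 :: List.replicate (n - 4) 1,
    3 :: List.replicate (n - 3) 1}

lemma pos_and_sum_eq_of_mem_dominanceInterval (hn : 4 ≤ n) {l : List ℕ}
    (hl : l ∈ dominanceInterval n) : (∀ r ∈ l, 0 < r) ∧ l.sum = n := by
  simp only [dominanceInterval, Multiset.insert_eq_cons, Multiset.mem_cons,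
    Multiset.mem_singleton] at hl
  obtain rfl | rfl | rfl | rfl := hl <;>
    simp +contextual [List.mem_replicate] <;> lia

/-- The sum of the power sums `p_l` over the dominance interval from `(1^n)` to `(3, 1^{n-3})`. -/
noncomputable def intervalPowerSum (N n : ℕ) : MvPolynomial (Fin N) ℤ :=
  ((dominanceInterval n).map (powerSum N)).sum

lemma intervalPowerSum_succ (hn : 4 ≤ n) :
    intervalPowerSum N (n + 1) = psum (Fin N) ℤ 1 * intervalPowerSum N n := by
  obtain ⟨m, rfl⟩ := Nat.exists_eq_add_of_le' hn
  simp only [intervalPowerSum, dominanceInterval, powerSum, psum, Multiset.insert_eq_cons,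
    Multiset.map_cons, Multiset.map_singleton, Multiset.sum_cons, Multiset.sum_singleton,
    List.map_cons, List.map_replicate, List.prod_cons, List.prod_replicate, Nat.reduceSubDiff,
    add_tsub_cancel_right, pow_succ, pow_zero, one_mul]
  ring

lemma isSymmetric_intervalPowerSum : (intervalPowerSum N n).IsSymmetric := by
  refine (mem_symmetricSubalgebra _).1 (multiset_sum_mem _ fun P hP => ?_)
  obtain ⟨l, -, rfl⟩ := Multiset.mem_map.1 hP
  exact isSymmetric_powerSum l

lemma schurCoeff_intervalPowerSum (hn : 4 ≤ n) (hN : n ≤ N) {s : List ℕ} (hs : s.length ≤ n) :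
    schurCoeff (pad N s + staircase N) (intervalPowerSum N n) =
      ((dominanceInterval n).map fun l => frobeniusChar n l s).sum := by
  rw [intervalPowerSum, map_multiset_sum, Multiset.map_map]
  exact congrArg Multiset.sum (Multiset.map_congr rfl fun l hl =>
    schurCoeff_powerSum_eq_frobeniusChar hN (pos_and_sum_eq_of_mem_dominanceInterval hn hl).1 hs)

lemma two_le_sum_evalSchurCoeff_five : ∀ lam ∈ Finset.Nat.antidiagonalTuple 5 5, Antitone lam →
    2 ≤ ((dominanceInterval 5).map fun l => evalSchurCoeff l (lam + staircase 5)).sum := by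
  decide +kernel

lemma two_le_sum_frobeniusChar_five (μ : Nat.Partition 5) :
    2 ≤ ((dominanceInterval 5).map fun l => frobeniusChar 5 l (sortedParts μ)).sum := by
  simp only [frobeniusChar, schurCoeff_powerSum]
  refine two_le_sum_evalSchurCoeff_five _ ?_ (antitone_pad (pairwise_sortedParts μ))
  rw [Finset.Nat.mem_antidiagonalTuple, sum_pad (length_sortedParts_le μ), sum_sortedParts]

theorem two_le_schurCoeff_intervalPowerSum (hN : 5 ≤ N) (hn : 5 ≤ n) {b : Fin N → ℕ}
    (hb : StrictAnti b) (hsum : ∑ i, b i = ∑ i, staircase N i + n) :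
    2 ≤ schurCoeff b (intervalPowerSum N n) := by
  induction n, hn using Nat.le_induction generalizing b with
  | base =>
    obtain ⟨lam, hlam, rfl⟩ := exists_antitone_add_staircase_eq hb
    simp only [Pi.add_apply, sum_add_distrib, add_comm (∑ i, lam i), add_left_cancel_iff] at hsum
    obtain ⟨μ, rfl⟩ := exists_pad_sortedParts_eq hN hlam hsum
    rw [schurCoeff_intervalPowerSum (by simp) hN (length_sortedParts_le μ)]
    exact two_le_sum_frobeniusChar_five μ
  | succ n hn ih =>
    rw [intervalPowerSum_succ (by lia)]
    exact le_schurCoeff_psum_one_mul zero_le_two (Nat.le_add_right _ n)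
      isSymmetric_intervalPowerSum (fun _ => ih) hb hsum

theorem two_le_sum_frobeniusChar (hn : 5 ≤ n) (μ : n.Partition) :
    2 ≤ ((dominanceInterval n).map fun l => frobeniusChar n l (sortedParts μ)).sum := by
  rw [← schurCoeff_intervalPowerSum (by lia) le_rfl (length_sortedParts_le μ)]
  refine two_le_schurCoeff_intervalPowerSum hn hn
    ((antitone_pad (pairwise_sortedParts μ)).add_strictAnti staircase_strictAnti) ?_
  simp only [Pi.add_apply, sum_add_distrib, sum_pad (length_sortedParts_le μ), sum_sortedParts,
    add_comm]

end Interval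

theorem schur_positive_interval_hook_general (n : ℕ) (hn : 5 ≤ n) :
    ∃ c : Nat.Partition n → ℕ, ∀ N, n ≤ N →
      powerSum N (List.replicate n 1) + powerSum N (2 :: List.replicate (n - 2) 1) +
          powerSum N (2 :: 2 :: List.replicate (n - 4) 1) +
          powerSum N (3 :: List.replicate (n - 3) 1) + powerSum N [n - 2, 1, 1] =
        ∑ μ : Nat.Partition n, (c μ : ℤ) • schurP N n (sortedParts μ) := by
  have partitions : ∀ l ∈ [n - 2, 1, 1] ::ₘ dominanceInterval n,
      (∀ r ∈ l, 0 < r) ∧ l.sum = n := by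
    refine Multiset.forall_mem_cons.2 ⟨by grind, fun l => ?_⟩
    exact pos_and_sum_eq_of_mem_dominanceInterval (by lia)
  obtain ⟨c, hc⟩ := exists_sum_powerSum_eq_sum_schurP partitions fun μ => by
    rw [Multiset.map_cons, Multiset.sum_cons]
    have neg_two_le : -2 ≤ frobeniusChar n [n - 2, 1, 1] (sortedParts μ) :=
      neg_le_of_abs_le (abs_frobeniusChar_hook_le_two (by lia) (by lia) _)
    linarith [two_le_sum_frobeniusChar hn μ]
  refine ⟨c, fun N hN => Eq.trans ?_ (hc N hN)⟩
  simp only [dominanceInterval, Multiset.insert_eq_cons, Multiset.map_cons,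
    Multiset.map_singleton, Multiset.sum_cons, Multiset.sum_singleton]
  ring

/-- For `n ≥ 9`, the symmetric function
`p_{(1^n)} + p_{(2,1^{n-2})} + p_{(2,2,1^{n-4})} + p_{(3,1^{n-3})} + p_{(n-2,1,1)}`
is Schur-positive. -/
theorem schur_positive_interval_hook (n : ℕ) (hn : 9 ≤ n) :
    ∃ c : Nat.Partition n → ℕ, ∀ N, n ≤ N →
      powerSum N (List.replicate n 1) + powerSum N (2 :: List.replicate (n - 2) 1) +
          powerSum N (2 :: 2 :: List.replicate (n - 4) 1) +
          powerSum N (3 :: List.replicate (n - 3) 1) + powerSum N [n - 2, 1, 1] =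
        ∑ μ : Nat.Partition n, (c μ : ℤ) • schurP N n (sortedParts μ) :=
  schur_positive_interval_hook_general n (le_trans (by norm_num) hn)
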